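/- Fix an integer r ≥ 1. There exists a constant C > 0 such that for every real number x ≥ 1, the family of terms 1/(φ([n_1,…,n_r])·n_1·n_2⋯n_r), indexed by multi-indices N = (n_1,…,n_r) of positive integers with x < n_1 ≤ 2x, is summable and its sum is at most C/x. -/

import Mathlib

open scoped BigOperators

/-- The general term `1/(φ([n_1,…,n_r])·n_1⋯n_r)` associated to a multi-index
`N = (n_1,…,n_r)` of positive integers. -/
noncomputable def eulerTerm (r : ℕ) (N : Fin r → ℕ+) : ℝ :=
  1 / ((Nat.totient (Finset.univ.lcm fun i => (N i : ℕ)) : ℝ) * ∏ i, ((N i : ℕ) : ℝ))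

open scoped ENNReal

/-- The reciprocal of a natural number, as an extended nonnegative real. -/
noncomputable def recip (n : ℕ) : ℝ≥0∞ := (n : ℝ≥0∞)⁻¹

/-- `σ(n)/n`, as an extended nonnegative real. -/
noncomputable def abund (n : ℕ) : ℝ≥0∞ := ∑ d ∈ n.divisors, recip d

lemma recip_mul (a b : ℕ) : recip (a * b) = recip a * recip b := by
  unfold recip
  rw [Nat.cast_mul, ENNReal.mul_inv (Or.inr (ENNReal.natCast_ne_top b))
    (Or.inl (ENNReal.natCast_ne_top a))]

lemma recip_self {a : ℕ} (ha : a ≠ 0) : (a : ℝ≥0∞) * recip a = 1 :=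
  ENNReal.mul_inv_cancel (by exact_mod_cast ha) (ENNReal.natCast_ne_top a)

lemma abund_mul (m n : ℕ) : abund (m * n) ≤ abund m * abund n := by
  classical
  unfold abund
  rw [Nat.divisors_mul, Finset.sum_mul_sum, ← Finset.sum_product']
  refine (Finset.sum_image_le_of_nonneg (fun _ _ => zero_le)).trans ?_
  exact le_of_eq (Finset.sum_congr rfl fun x _ => recip_mul _ _)

lemma abund_mono {m n : ℕ} (hn : n ≠ 0) (h : m ∣ n) : abund m ≤ abund n :=
  Finset.sum_le_sum_of_subset (Nat.divisors_subset_of_dvd hn h)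

lemma sum_divisors_eq_tsum (n : ℕ) (hn : n ≠ 0) (G : ℕ → ℝ≥0∞) :
    ∑ d ∈ n.divisors, G d = ∑' d : ℕ+, if (d : ℕ) ∣ n then G d else 0 := by
  classical
  have h0 : ∑ d ∈ n.divisors, G d = ∑' d : ℕ, if d ∈ n.divisors then G d else 0 := by
    rw [tsum_eq_sum (s := n.divisors) (by intro b hb; rw [if_neg hb])]
    exact Finset.sum_congr rfl fun d hd => by rw [if_pos hd]
  rw [h0]
  rw [← Function.Injective.tsum_eq PNat.coe_injective]
  · refine tsum_congr fun d => ?_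
    simp [Nat.mem_divisors, hn]
  · intro d hd
    have : d ∈ n.divisors := by
      by_contra h
      exact hd (if_neg h)
    exact ⟨⟨d, Nat.pos_of_mem_divisors this⟩, rfl⟩

lemma tsum_dvd (d : ℕ+) (G : ℕ → ℝ≥0∞) :
    ∑' n : ℕ+, (if (d : ℕ) ∣ n then G n else 0) = ∑' k : ℕ+, G (d * k) := by
  classical
  have hinj : Function.Injective (fun k : ℕ+ => d * k) := mul_right_injective d
  rw [← hinj.tsum_eq]
  · refine tsum_congr fun k => ?_
    simp
  · intro n hn
    have : (d : ℕ) ∣ n := by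
      by_contra h
      simp [h] at hn
    obtain ⟨k, hk⟩ := PNat.dvd_iff.mpr this
    exact ⟨k, hk.symm⟩

lemma tsum_divisors (G : ℕ → ℕ → ℝ≥0∞) :
    ∑' n : ℕ+, ∑ d ∈ (n : ℕ).divisors, G d n = ∑' d : ℕ+, ∑' k : ℕ+, G d (d * k) := by
  rw [tsum_congr fun n : ℕ+ => sum_divisors_eq_tsum n n.ne_zero (fun d => G d n),
    ENNReal.tsum_comm]
  exact tsum_congr fun d => tsum_dvd d (G d)

/-- The moments `∑ (σ(n)/n)^a / n²`. -/
noncomputable def momK (a : ℕ) : ℝ≥0∞ := ∑' n : ℕ+, abund n ^ a * recip n ^ 2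

lemma recip_le_one (n : ℕ+) : recip n ≤ 1 := by
  unfold recip
  rw [ENNReal.inv_le_one]
  exact_mod_cast n.pos

lemma momK_zero : momK 0 ≠ ⊤ := by
  have h : Summable (fun n : ℕ+ => 1 / ((n : ℕ) : ℝ) ^ 2) :=
    (Real.summable_one_div_nat_pow.mpr (by norm_num)).comp_injective PNat.coe_injective
  have := h.tsum_ofReal_ne_top
  unfold momK
  convert this using 3 with n
  have hn : (0 : ℝ) < ((n : ℕ) : ℝ) := by exact_mod_cast n.pos
  rw [pow_zero, one_mul, one_div, ← inv_pow, ENNReal.ofReal_pow (by positivity),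
    ENNReal.ofReal_inv_of_pos hn, ENNReal.ofReal_natCast, recip]

lemma momK_succ (a : ℕ) : momK (a + 1) ≤ momK a * momK a := by
  calc momK (a + 1) = ∑' n : ℕ+, ∑ d ∈ (n : ℕ).divisors,
        abund n ^ a * recip n ^ 2 * recip d := by
        unfold momK
        refine tsum_congr fun n => ?_
        rw [← Finset.mul_sum, ← abund, pow_succ]; ring
    _ = ∑' d : ℕ+, ∑' k : ℕ+, abund (d * k) ^ a * recip (d * k) ^ 2 * recip d :=
        tsum_divisors (fun d n => abund n ^ a * recip n ^ 2 * recip d)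
    _ ≤ ∑' d : ℕ+, ∑' k : ℕ+, (abund d ^ a * recip d ^ 2) * (abund k ^ a * recip k ^ 2) := by
        refine ENNReal.tsum_le_tsum fun d => ENNReal.tsum_le_tsum fun k => ?_
        calc abund (d * k) ^ a * recip (d * k) ^ 2 * recip d
            ≤ (abund d * abund k) ^ a * recip (d * k) ^ 2 * 1 := by
              gcongr
              · exact abund_mul _ _
              · exact recip_le_one d
          _ = _ := by rw [recip_mul]; ring
    _ = momK a * momK a := by
        simp_rw [ENNReal.tsum_mul_left, ENNReal.tsum_mul_right]
        rfl

lemma momK_ne_top (a : ℕ) : momK a ≠ ⊤ := by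
  induction a with
  | zero => exact momK_zero
  | succ a ih => exact ne_top_of_le_ne_top (ENNReal.mul_ne_top ih ih) (momK_succ a)

lemma partial_sum (a : ℕ) : ∃ C : ℝ≥0∞, C ≠ ⊤ ∧ ∀ X : ℕ,
    ∑' n : ℕ+, (if (n : ℕ) ≤ X then abund n ^ a else 0) ≤ C * X := by
  induction a with
  | zero =>
    refine ⟨1, ENNReal.one_ne_top, fun X => ?_⟩
    calc ∑' n : ℕ+, (if (n : ℕ) ≤ X then abund n ^ 0 else 0)
        = ∑' n : ℕ+, (if (n : ℕ) ∈ Finset.Icc 1 X then (1 : ℝ≥0∞) else 0) := by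
          refine tsum_congr fun n => ?_
          simp [Nat.succ_le_iff]
      _ ≤ ∑' n : ℕ, (if n ∈ Finset.Icc 1 X then (1 : ℝ≥0∞) else 0) :=
          ENNReal.tsum_comp_le_tsum_of_injective PNat.coe_injective
            (fun n => if n ∈ Finset.Icc 1 X then (1 : ℝ≥0∞) else 0)
      _ = ∑ n ∈ Finset.Icc 1 X, (if n ∈ Finset.Icc 1 X then (1 : ℝ≥0∞) else 0) :=
          tsum_eq_sum (by intro b hb; rw [if_neg hb])
      _ = 1 * X := by
          rw [Finset.sum_congr rfl fun n hn => if_pos hn]; simp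
  | succ a ih =>
    obtain ⟨C, hC, h⟩ := ih
    refine ⟨C * momK a, ENNReal.mul_ne_top hC (momK_ne_top a), fun X => ?_⟩
    calc ∑' n : ℕ+, (if (n : ℕ) ≤ X then abund n ^ (a + 1) else 0)
        = ∑' n : ℕ+, ∑ d ∈ (n : ℕ).divisors,
          (if (n : ℕ) ≤ X then abund n ^ a else 0) * recip d := by
          refine tsum_congr fun n => ?_
          rw [← Finset.mul_sum, ← abund, pow_succ, ite_mul, zero_mul]
      _ = ∑' d : ℕ+, ∑' k : ℕ+,
          (if (d * k : ℕ) ≤ X then abund (d * k) ^ a else 0) * recip d :=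
          tsum_divisors (fun d n => (if (n : ℕ) ≤ X then abund n ^ a else 0) * recip d)
      _ ≤ ∑' d : ℕ+, ∑' k : ℕ+,
          (abund d ^ a * recip d) * (if (k : ℕ) ≤ X / d then abund k ^ a else 0) := by
          refine ENNReal.tsum_le_tsum fun d => ENNReal.tsum_le_tsum fun k => ?_
          have : (d * k : ℕ) ≤ X ↔ (k : ℕ) ≤ X / d := by
            rw [Nat.le_div_iff_mul_le d.pos, mul_comm]
          simp only [this]
          split_ifs
          · calc abund (d * k) ^ a * recip d ≤ (abund d * abund k) ^ a * recip d := by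
                  gcongr
                  exact abund_mul _ _
              _ = _ := by ring
          · simp
      _ ≤ ∑' d : ℕ+, (abund d ^ a * recip d) * (C * (X * recip d)) := by
          refine ENNReal.tsum_le_tsum fun d => ?_
          rw [ENNReal.tsum_mul_left]
          gcongr
          refine (h (X / d)).trans ?_
          gcongr
          rw [recip, ← div_eq_mul_inv]
          exact ENNReal.le_div_iff_mul_le (by simp) (by simp) |>.mpr
            (by exact_mod_cast Nat.div_mul_le_self X d)
      _ = C * momK a * X := by
          unfold momK
          rw [mul_right_comm, ← ENNReal.tsum_mul_left]
          exact tsum_congr fun d => by ring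

lemma recip_lcm (m n : ℕ+) :
    recip (Nat.lcm m n) = (Nat.gcd m n : ℝ≥0∞) * (recip m * recip n) := by
  rw [← recip_mul, ← Nat.gcd_mul_lcm, recip_mul, ← mul_assoc,
    recip_self (Nat.gcd_pos_of_pos_left _ m.pos).ne', one_mul]

lemma lcm_step (a : ℕ) (m : ℕ+) :
    ∑' n : ℕ+, abund (Nat.lcm m n) ^ a * recip (Nat.lcm m n) * recip n ≤
      momK a * abund m ^ (2 * a + 1) * recip m := by
  classical
  calc ∑' n : ℕ+, abund (Nat.lcm m n) ^ a * recip (Nat.lcm m n) * recip n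
      ≤ ∑' n : ℕ+, ∑' d : ℕ+, (abund m ^ a * recip m) * (if (d : ℕ) ∣ m then
          (if (d : ℕ) ∣ n then (d : ℝ≥0∞) * (abund n ^ a * recip n ^ 2) else 0) else 0) := by
        refine ENNReal.tsum_le_tsum fun n => ?_
        have hg := Nat.gcd_pos_of_pos_left n m.pos
        refine le_trans ?_ (ENNReal.le_tsum ⟨Nat.gcd m n, hg⟩)
        simp only [PNat.mk_coe, Nat.gcd_dvd_left, Nat.gcd_dvd_right, if_true]
        calc abund (Nat.lcm m n) ^ a * recip (Nat.lcm m n) * recip n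
            ≤ (abund m * abund n) ^ a * recip (Nat.lcm m n) * recip n := by
              gcongr
              exact (abund_mono (mul_pos m.pos n.pos).ne' (Nat.lcm_dvd_mul _ _)).trans
                (abund_mul _ _)
          _ = _ := by rw [recip_lcm]; ring
    _ = (abund m ^ a * recip m) * ∑' d : ℕ+, (if (d : ℕ) ∣ m then
          ∑' k : ℕ+, (d : ℝ≥0∞) * (abund (d * k) ^ a * recip (d * k) ^ 2) else 0) := by
        rw [ENNReal.tsum_comm]
        simp_rw [ENNReal.tsum_mul_left]
        congr 1
        refine tsum_congr fun d => ?_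
        split_ifs
        · have := tsum_dvd d (fun n => (d : ℝ≥0∞) * (abund n ^ a * recip n ^ 2))
          simpa [ENNReal.tsum_mul_left] using this
        · simp
    _ ≤ (abund m ^ a * recip m) * ∑' d : ℕ+, (if (d : ℕ) ∣ m then
          abund m ^ a * momK a * recip d else 0) := by
        gcongr with d
        split_ifs with hd
        · calc ∑' k : ℕ+, (d : ℝ≥0∞) * (abund (d * k) ^ a * recip (d * k) ^ 2)
              ≤ ∑' k : ℕ+, (abund m ^ a * recip d) * (abund k ^ a * recip k ^ 2) := by
                refine ENNReal.tsum_le_tsum fun k => ?_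
                calc (d : ℝ≥0∞) * (abund (d * k) ^ a * recip (d * k) ^ 2)
                    ≤ (d : ℝ≥0∞) * ((abund m * abund k) ^ a * recip (d * k) ^ 2) := by
                      gcongr
                      exact (abund_mul _ _).trans
                        (mul_le_mul_left (abund_mono m.ne_zero hd) _)
                  _ = ((d : ℕ) * recip d) * ((abund m ^ a * recip d) *
                        (abund k ^ a * recip k ^ 2)) := by rw [recip_mul]; ring
                  _ = _ := by rw [recip_self d.ne_zero, one_mul]
            _ = abund m ^ a * momK a * recip d := by
                rw [ENNReal.tsum_mul_left, ← momK]; ring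
        · exact le_rfl
    _ = momK a * abund m ^ (2 * a + 1) * recip m := by
        rw [← sum_divisors_eq_tsum m m.ne_zero (fun d => abund m ^ a * momK a * recip d),
          ← Finset.mul_sum, ← abund]
        ring

lemma lcm_cons (s : ℕ) (n : ℕ+) (N : Fin s → ℕ+) :
    (Finset.univ.lcm fun i => ((Fin.cons n N : Fin (s + 1) → ℕ+) i : ℕ)) =
      Nat.lcm n (Finset.univ.lcm fun i => (N i : ℕ)) := by
  classical
  rw [Fin.univ_succ, Finset.cons_eq_insert, Finset.lcm_insert, Finset.map_eq_image,
    Finset.lcm_image]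
  rfl

lemma tsum_cons (s : ℕ) (F : (Fin (s + 1) → ℕ+) → ℝ≥0∞) :
    ∑' N, F N = ∑' n : ℕ+, ∑' N : Fin s → ℕ+, F (Fin.cons n N) := by
  rw [← (Fin.consEquiv fun _ => ℕ+).tsum_eq, ENNReal.tsum_prod']
  rfl

lemma lcm_multi (s : ℕ) : ∀ a : ℕ, ∃ K : ℝ≥0∞, K ≠ ⊤ ∧ ∃ B : ℕ, ∀ m : ℕ+,
    ∑' N : Fin s → ℕ+, abund (Nat.lcm m (Finset.univ.lcm fun i => (N i : ℕ))) ^ a *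
      recip (Nat.lcm m (Finset.univ.lcm fun i => (N i : ℕ))) * ∏ i, recip (N i) ≤
      K * abund m ^ B * recip m := by
  induction s with
  | zero =>
    intro a
    refine ⟨1, ENNReal.one_ne_top, a, fun m => ?_⟩
    simp [tsum_fintype]
  | succ s ih =>
    intro a
    obtain ⟨K, hK, B, h⟩ := ih a
    refine ⟨K * momK B, ENNReal.mul_ne_top hK (momK_ne_top B), 2 * B + 1, fun m => ?_⟩
    rw [tsum_cons]
    simp_rw [lcm_cons, ← Nat.lcm_assoc, Fin.prod_univ_succ, Fin.cons_zero, Fin.cons_succ]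
    calc _ ≤ ∑' n : ℕ+, K * (abund (Nat.lcm m n) ^ B * recip (Nat.lcm m n) * recip n) := by
          refine ENNReal.tsum_le_tsum fun n => ?_
          have := h ⟨Nat.lcm m n, Nat.lcm_pos m.pos n.pos⟩
          simp only [PNat.mk_coe] at this
          calc _ = recip n * ∑' N : Fin s → ℕ+,
                abund (Nat.lcm (Nat.lcm m n) (Finset.univ.lcm fun i => (N i : ℕ))) ^ a *
                recip (Nat.lcm (Nat.lcm m n) (Finset.univ.lcm fun i => (N i : ℕ))) *
                ∏ i, recip (N i) := by
                rw [← ENNReal.tsum_mul_left]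
                exact tsum_congr fun N => by ring
            _ ≤ recip n * (K * abund (Nat.lcm m n) ^ B * recip (Nat.lcm m n)) := by gcongr
            _ = _ := by ring
      _ ≤ K * (momK B * abund m ^ (2 * B + 1) * recip m) := by
          rw [ENNReal.tsum_mul_left]
          gcongr
          exact lcm_step B m
      _ = _ := by ring

lemma totient_sigma (n : ℕ) : n ^ 3 ≤ (∑ d ∈ n.divisors, d) ^ 2 * n.totient := by
  induction n using Nat.recOnPosPrimePosCoprime with
  | prime_pow p k hp hk =>
    obtain ⟨k, rfl⟩ := Nat.exists_eq_succ_of_ne_zero hk.ne'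
    rw [Nat.sum_divisors_prime_pow hp, Nat.totient_prime_pow hp hk, Finset.sum_range_succ,
      Finset.sum_range_succ]
    obtain ⟨q, rfl⟩ := Nat.exists_eq_add_of_le hp.two_le
    simp only [Nat.succ_eq_add_one, Nat.add_sub_cancel]
    have e : 2 + q - 1 = q + 1 := by omega
    rw [e]
    calc ((2 + q) ^ (k + 1)) ^ 3 = ((2 + q) ^ k) ^ 3 * (2 + q) ^ 3 := by ring
      _ ≤ ((2 + q) ^ k) ^ 3 * ((3 + q) ^ 2 * (q + 1)) := by
          gcongr
          nlinarith [sq_nonneg q]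
      _ = ((2 + q) ^ k + (2 + q) ^ (k + 1)) ^ 2 * ((2 + q) ^ k * (q + 1)) := by ring
      _ ≤ _ := by gcongr; omega
  | zero => simp
  | one => simp
  | coprime a b _ _ hab ha hb =>
    rw [hab.sum_divisors_mul, Nat.totient_mul hab, mul_pow]
    calc _ ≤ _ := Nat.mul_le_mul ha hb
      _ = _ := by ring

lemma mul_abund (n : ℕ) : (n : ℝ≥0∞) * abund n = ((∑ d ∈ n.divisors, d : ℕ) : ℝ≥0∞) := by
  rw [← Nat.sum_div_divisors n (fun d => d), abund, Finset.mul_sum, Nat.cast_sum]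
  refine Finset.sum_congr rfl fun d hd => ?_
  have hd0 : d ≠ 0 := (Nat.pos_of_mem_divisors hd).ne'
  obtain ⟨k, rfl⟩ := Nat.dvd_of_mem_divisors hd
  rw [Nat.mul_div_cancel_left _ (Nat.pos_of_ne_zero hd0), Nat.cast_mul, mul_right_comm,
    recip_self hd0, one_mul]

lemma recip_totient (n : ℕ) (hn : n ≠ 0) : recip n.totient ≤ abund n ^ 2 * recip n := by
  have h : ((n ^ 3 : ℕ) : ℝ≥0∞) ≤ (((∑ d ∈ n.divisors, d) ^ 2 * n.totient : ℕ) : ℝ≥0∞) := by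
    exact_mod_cast totient_sigma n
  rw [Nat.cast_mul, Nat.cast_pow, Nat.cast_pow, ← mul_abund] at h
  have ht : n.totient ≠ 0 := (Nat.totient_pos.mpr (Nat.pos_of_ne_zero hn)).ne'
  have h1 := recip_self hn
  have h2 := recip_self ht
  calc recip n.totient = (n * recip n) ^ 3 * recip n.totient := by rw [h1]; simp
    _ = (n : ℝ≥0∞) ^ 3 * (recip n ^ 3 * recip n.totient) := by ring
    _ ≤ ((n * abund n) ^ 2 * n.totient) * (recip n ^ 3 * recip n.totient) := by gcongr
    _ = (n * recip n) ^ 2 * (n.totient * recip n.totient) * (abund n ^ 2 * recip n) := by ring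
    _ = _ := by rw [h1, h2]; simp

lemma ofReal_eulerTerm (r : ℕ) (N : Fin r → ℕ+) :
    ENNReal.ofReal (eulerTerm r N) =
      recip (Nat.totient (Finset.univ.lcm fun i => (N i : ℕ))) * ∏ i, recip (N i) := by
  have hL : (Finset.univ.lcm fun i => (N i : ℕ)) ≠ 0 := by
    rw [Ne, Finset.lcm_eq_zero_iff]; simp
  have ht := Nat.totient_pos.mpr (Nat.pos_of_ne_zero hL)
  have hp : ∏ i, recip (N i) = recip (∏ i, (N i : ℕ)) := by
    induction r with
    | zero => simp [recip]
    | succ r ih =>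
      rw [Fin.prod_univ_succ, Fin.prod_univ_succ, recip_mul, ih (fun i => N i.succ)]
      · rw [Ne, Finset.lcm_eq_zero_iff]; simp
      · refine Nat.totient_pos.mpr (Nat.pos_of_ne_zero ?_)
        rw [Ne, Finset.lcm_eq_zero_iff]; simp
  have hpos : 0 < ∏ i, (N i : ℕ) := Finset.prod_pos fun i _ => (N i).pos
  rw [hp, ← recip_mul, eulerTerm, recip, one_div, ENNReal.ofReal_inv_of_pos]
  · rw [← ENNReal.ofReal_natCast]; push_cast; rfl
  · exact_mod_cast Nat.mul_pos ht hpos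

lemma dyadic_ennreal (s : ℕ) : ∃ C : ℝ≥0∞, C ≠ ⊤ ∧ ∀ x : ℝ, 1 ≤ x →
    ∑' N : {N : Fin (s + 1) → ℕ+ // x < ((N 0 : ℕ) : ℝ) ∧ ((N 0 : ℕ) : ℝ) ≤ 2 * x},
      ENNReal.ofReal (eulerTerm (s + 1) N.1) ≤ C * ENNReal.ofReal (1 / x) := by
  classical
  obtain ⟨K, hK, B, h⟩ := lcm_multi s 2
  obtain ⟨C, hC, hS⟩ := partial_sum B
  refine ⟨K * C * 2, by finiteness, fun x hx => ?_⟩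
  have hx0 : 0 < x := by linarith
  set P : ℕ+ → Prop := fun n => x < ((n : ℕ) : ℝ) ∧ ((n : ℕ) : ℝ) ≤ 2 * x with hP
  set y := ENNReal.ofReal (1 / x) with hy
  have e := tsum_subtype {N : Fin (s + 1) → ℕ+ | P (N 0)}
    (fun N => ENNReal.ofReal (eulerTerm (s + 1) N))
  refine (le_of_eq e).trans ?_
  rw [tsum_cons]
  have hrec : ∀ n : ℕ+, P n → recip n ≤ y := by
    intro n hn
    rw [recip, hy, ← ENNReal.ofReal_natCast, ← ENNReal.ofReal_inv_of_pos (hx0.trans hn.1)]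
    apply ENNReal.ofReal_le_ofReal
    rw [one_div]
    exact inv_anti₀ hx0 hn.1.le
  calc _ ≤ ∑' n : ℕ+, (K * y ^ 2) * (if (n : ℕ) ≤ ⌊2 * x⌋₊ then abund n ^ B else 0) := by
        refine ENNReal.tsum_le_tsum fun n => ?_
        by_cases hn : P n
        · have hn' : (n : ℕ) ≤ ⌊2 * x⌋₊ := Nat.le_floor hn.2
          rw [if_pos hn']
          calc _ ≤ ∑' N : Fin s → ℕ+, recip n *
                  (abund (Nat.lcm n (Finset.univ.lcm fun i => (N i : ℕ))) ^ 2 *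
                  recip (Nat.lcm n (Finset.univ.lcm fun i => (N i : ℕ))) *
                    ∏ i, recip (N i)) := by
                refine ENNReal.tsum_le_tsum fun N => ?_
                refine (Set.indicator_le_self _ _ _).trans ?_
                rw [ofReal_eulerTerm, lcm_cons, Fin.prod_univ_succ]
                simp only [Fin.cons_zero, Fin.cons_succ]
                have hL : Nat.lcm n (Finset.univ.lcm fun i => (N i : ℕ)) ≠ 0 := by
                  refine Nat.lcm_ne_zero n.ne_zero ?_
                  rw [Ne, Finset.lcm_eq_zero_iff]; simp
                calc _ ≤ _ := mul_le_mul_left (recip_totient _ hL) _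
                  _ = _ := by ring
            _ ≤ recip n * (K * abund n ^ B * recip n) := by
                rw [ENNReal.tsum_mul_left]
                gcongr
                exact h n
            _ ≤ y * (K * abund n ^ B * y) := by
                have := hrec n hn
                gcongr
            _ = _ := by ring
        · have : ∀ N : Fin s → ℕ+,
              (Fin.cons n N : Fin (s + 1) → ℕ+) ∉ {N : Fin (s + 1) → ℕ+ | P (N 0)} := by
            intro N; simpa using hn
          simp [Set.indicator_of_notMem (this _)]
    _ ≤ (K * y ^ 2) * (C * (ENNReal.ofReal (2 * x))) := by
        rw [ENNReal.tsum_mul_left]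
        gcongr
        refine (hS _).trans ?_
        gcongr
        rw [← ENNReal.ofReal_natCast]
        exact ENNReal.ofReal_le_ofReal (Nat.floor_le (by positivity))
    _ = K * C * 2 * y * (y * ENNReal.ofReal x) := by
        rw [ENNReal.ofReal_mul (by norm_num)]
        simp only [ENNReal.ofReal_ofNat]; ring
    _ = _ := by
        rw [hy, ← ENNReal.ofReal_mul (by positivity), one_div_mul_cancel hx0.ne']
        simp

/-- Fix `r ≥ 1`. There is a constant `C > 0` such that for every real
`x ≥ 1`, the family `1/(φ([n_1,…,n_r])·n_1⋯n_r)` over multi-indices with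
`x < n_1 ≤ 2x` is summable with sum at most `C/x`. -/
theorem dyadic_sum_totient_lcm_bigO (r : ℕ) (hr : 1 ≤ r) :
    ∃ C : ℝ, 0 < C ∧ ∀ x : ℝ, 1 ≤ x →
      Summable (fun N : {N : Fin r → ℕ+ //
          x < ((N ⟨0, hr⟩ : ℕ) : ℝ) ∧ ((N ⟨0, hr⟩ : ℕ) : ℝ) ≤ 2 * x} => eulerTerm r N.1) ∧
      ∑' N : {N : Fin r → ℕ+ //
          x < ((N ⟨0, hr⟩ : ℕ) : ℝ) ∧ ((N ⟨0, hr⟩ : ℕ) : ℝ) ≤ 2 * x}, eulerTerm r N.1 ≤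
        C / x := by
  obtain ⟨s, rfl⟩ : ∃ s, r = s + 1 := ⟨r - 1, by omega⟩
  obtain ⟨C, hC, h⟩ := dyadic_ennreal s
  refine ⟨C.toReal + 1, by positivity, fun x hx => ?_⟩
  have hx0 : 0 < x := by linarith
  have h' := h x hx
  have hfin : C * ENNReal.ofReal (1 / x) ≠ ⊤ := by finiteness
  have hnn : ∀ N : Fin (s + 1) → ℕ+, 0 ≤ eulerTerm (s + 1) N := by
    intro N; unfold eulerTerm; positivity
  have e : ∀ N : Fin (s + 1) → ℕ+,
      eulerTerm (s + 1) N = (ENNReal.ofReal (eulerTerm (s + 1) N)).toReal :=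
    fun N => (ENNReal.toReal_ofReal (hnn N)).symm
  constructor
  · have := ENNReal.summable_toReal (ne_top_of_le_ne_top hfin h')
    exact this.congr fun N => (e N.1).symm
  · have h3 := ENNReal.toReal_mono hfin h'
    rw [ENNReal.tsum_toReal_eq (fun _ => ENNReal.ofReal_ne_top), ENNReal.toReal_mul,
      ENNReal.toReal_ofReal (by positivity)] at h3
    simp only [← e] at h3
    refine le_trans h3 ?_
    rw [mul_one_div]
    gcongr
    linarith
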